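/- For a natural number q ≥ 3, define d(q) = ∏_{j=0}^{q−3} (q+j−1)(q+j) and e(q) = ∏_{j=0}^{q−3} (j+1)(j+2). Then e(q) divides d(q), and the quotient d(q)/e(q) is odd if and only if q = 2^k + 1 for some natural number k ≥ 1. -/

import Mathlib

/-!
With `n = q - 2` the two products are `n! * (n + 1)! * (2 * n + 1) * catalan n ^ 2` and
`n! * (n + 1)!`, so the quotient has the parity of `catalan n`. Since
`(2 * n + 1) * catalan n = (2 * n + 1).choose n`, Lucas' theorem modulo `2` gives
`catalan n ≡ n.choose (n / 2)`. For `n = 2 * m + 1` the right-hand side is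
`(2 * m + 1) * catalan m ≡ catalan m`, and for `n = 2 * m > 0` it is an even central binomial
coefficient. Hence `catalan n` is odd exactly when repeatedly applying `2 * m + 1 ↦ m` leads
from `n` to `0`, that is, when `n + 1` is a power of two.
-/

open Finset
open scoped Nat

theorem choose_two_mul_add_one_eq_mul_catalan (n : ℕ) :
    (2 * n + 1).choose n = (2 * n + 1) * catalan n := by
  refine Nat.eq_of_mul_eq_mul_right n.succ_pos ?_
  calc (2 * n + 1).choose n * (n + 1)
      = (2 * n + 1).choose (n + 1) * (n + 1) := by rw [Nat.choose_symm_half]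
    _ = (2 * n + 1) * (2 * n).choose n := (Nat.add_one_mul_choose_eq (2 * n) n).symm
    _ = (2 * n + 1) * ((n + 1) * catalan n) := by
      rw [succ_mul_catalan_eq_centralBinom, Nat.centralBinom_eq_two_mul_choose]
    _ = (2 * n + 1) * catalan n * (n + 1) := by ring

theorem odd_choose_two_mul_add_one_iff (m k : ℕ) :
    Odd ((2 * m + 1).choose k) ↔ Odd (m.choose (k / 2)) := by
  have lucas := Choose.choose_modEq_choose_mod_mul_choose_div_nat (n := 2 * m + 1) (k := k) (p := 2)
  have choose_last_digit : Nat.choose 1 (k % 2) = 1 := by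
    rcases Nat.mod_two_eq_zero_or_one k with h | h <;> simp [h]
  rw [show (2 * m + 1) % 2 = 1 by lia, show (2 * m + 1) / 2 = m by lia, choose_last_digit,
    one_mul] at lucas
  rw [Nat.odd_iff, Nat.odd_iff, lucas]

theorem odd_choose_two_mul_add_one_self_iff (n : ℕ) :
    Odd ((2 * n + 1).choose n) ↔ Odd (catalan n) := by
  rw [choose_two_mul_add_one_eq_mul_catalan, Nat.odd_mul]
  exact and_iff_right (odd_two_mul_add_one n)

theorem odd_catalan_iff_odd_choose_half (n : ℕ) : Odd (catalan n) ↔ Odd (n.choose (n / 2)) := by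
  rw [← odd_choose_two_mul_add_one_self_iff, odd_choose_two_mul_add_one_iff]

theorem odd_catalan_two_mul_add_one_iff (m : ℕ) :
    Odd (catalan (2 * m + 1)) ↔ Odd (catalan m) := by
  rw [odd_catalan_iff_odd_choose_half, show (2 * m + 1) / 2 = m by lia,
    odd_choose_two_mul_add_one_self_iff]

theorem odd_catalan_two_mul_iff (m : ℕ) : Odd (catalan (2 * m)) ↔ m = 0 := by
  rw [odd_catalan_iff_odd_choose_half, Nat.mul_div_cancel_left m two_pos,
    ← Nat.centralBinom_eq_two_mul_choose]
  constructor
  · contrapose!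
    intro hm
    exact Nat.not_odd_iff_even.mpr
      (even_iff_two_dvd.mpr (Nat.two_dvd_centralBinom_of_one_le (Nat.pos_of_ne_zero hm)))
  · rintro rfl
    simp

theorem odd_catalan_iff_exists_add_one_eq_two_pow (n : ℕ) :
    Odd (catalan n) ↔ ∃ k : ℕ, n + 1 = 2 ^ k := by
  induction n using Nat.strong_induction_on with
  | _ n ih =>
    obtain ⟨m, rfl | rfl⟩ := n.even_or_odd'
    · rw [odd_catalan_two_mul_iff]
      constructor
      · rintro rfl
        exact ⟨0, rfl⟩
      · rintro ⟨_ | k, hk⟩ <;> lia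
    · rw [odd_catalan_two_mul_add_one_iff, ih m (by lia)]
      constructor
      · rintro ⟨k, hk⟩
        exact ⟨k + 1, by lia⟩
      · rintro ⟨_ | k, hk⟩
        · lia
        · exact ⟨k, by lia⟩

theorem prod_range_add_one_mul_add_two (n : ℕ) :
    ∏ j ∈ range n, (j + 1) * (j + 2) = n ! * (n + 1)! := by
  rw [prod_mul_distrib, prod_range_add_one_eq_factorial, ← prod_range_add_one_eq_factorial (n + 1),
    prod_range_succ']
  simp

theorem prod_range_add_one_add_mul_add_two_add (n : ℕ) :
    ∏ j ∈ range n, (n + 1 + j) * (n + 2 + j) =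
      n ! * (n + 1)! * ((2 * n + 1) * catalan n ^ 2) := by
  have first_factor : (n + 1).ascFactorial n = n ! * ((n + 1) * catalan n) := by
    rw [Nat.ascFactorial_eq_factorial_mul_choose, succ_mul_catalan_eq_centralBinom,
      Nat.centralBinom_eq_two_mul_choose, two_mul]
  have second_factor : (n + 2).ascFactorial n = n ! * ((2 * n + 1) * catalan n) := by
    rw [Nat.ascFactorial_eq_factorial_mul_choose, ← choose_two_mul_add_one_eq_mul_catalan,
      show n + 1 + n = 2 * n + 1 by ring]
  rw [prod_mul_distrib, ← Nat.ascFactorial_eq_prod_range, ← Nat.ascFactorial_eq_prod_range,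
    first_factor, second_factor, Nat.factorial_succ]
  ring

theorem degree_odd_iff_pow_two_add_one (q : ℕ) (hq : 3 ≤ q) :
    (∏ j ∈ Finset.range (q - 2), (j + 1) * (j + 2)) ∣
        (∏ j ∈ Finset.range (q - 2), (q + j - 1) * (q + j)) ∧
      (Odd ((∏ j ∈ Finset.range (q - 2), (q + j - 1) * (q + j)) /
          (∏ j ∈ Finset.range (q - 2), (j + 1) * (j + 2))) ↔
        ∃ k : ℕ, 1 ≤ k ∧ q = 2 ^ k + 1) := by
  obtain ⟨n, rfl⟩ : ∃ n, q = n + 2 := ⟨q - 2, by lia⟩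
  have shift (j : ℕ) : n + 2 + j - 1 = n + 1 + j := by lia
  simp only [Nat.add_sub_cancel, shift]
  rw [prod_range_add_one_mul_add_two, prod_range_add_one_add_mul_add_two_add]
  refine ⟨dvd_mul_right _ _, ?_⟩
  rw [Nat.mul_div_cancel_left _ (by positivity), Nat.odd_mul, Nat.odd_pow_iff two_ne_zero,
    and_iff_right (odd_two_mul_add_one n), odd_catalan_iff_exists_add_one_eq_two_pow]
  constructor
  · rintro ⟨k, hk⟩
    have hk0 : k ≠ 0 := by rintro rfl; lia
    exact ⟨k, Nat.one_le_iff_ne_zero.mpr hk0, by lia⟩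
  · rintro ⟨k, -, hk⟩
    exact ⟨k, by lia⟩
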